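/- arXiv:1007.2207 — 11 statements merged into one kernel-verified Lean document; each statement's English description precedes it below -/
import Mathlib

section
/- Let X be a metric space with basepoint t₀ and U : X → ℓ∞(𝓛) the universal embedding. Let λ ≥ 1 and let Z be a real normed space that is λ-injective, witnessed as follows: there exist an index set Γ, a linear isometry I : Z → ℓ∞(Γ), and a bounded linear map P : ℓ∞(Γ) → Z with P ∘ I = id_Z and ‖P‖ ≤ λ. Then for every 1-Lipschitz map g : X → Z there exists an affine map g̃ : ℓ∞(𝓛) → Z which is λ-Lipschitz and satisfies g = g̃ ∘ U. -/
/-!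
The map `g - g t₀` followed by `I` has coordinates that are `1`-Lipschitz functions vanishing
at `t₀`, so each coordinate `γ` names an index `coordIndex γ ∈ 𝓛`. Composition with this reindexing
`Γ → 𝓛` is a linear contraction `R : ℓ∞(𝓛) → ℓ∞(Γ)`, and by construction
`R (U x) = I (g x - g t₀)`. Hence `v ↦ P (R v) + g t₀` is the required affine extension.
-/

open scoped ENNReal NNReal

/-- The index set `𝓛`: 1-Lipschitz real functions on `X` vanishing at the basepoint `t₀`. -/
def LipL {X : Type*} [MetricSpace X] (t₀ : X) : Type _ :=
  {f : X → ℝ // LipschitzWith 1 f ∧ f t₀ = 0}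

/-- The universal embedding `U : X → ℓ∞(𝓛)`, `U(t) = (f(t))_{f ∈ 𝓛}`. -/
noncomputable def univEmb {X : Type*} [MetricSpace X] (t₀ : X) (t : X) :
    lp (fun _ : LipL t₀ => ℝ) ∞ :=
  ⟨fun f => f.1 t, memℓp_infty (by
    refine ⟨dist t t₀, ?_⟩
    rintro r ⟨f, rfl⟩
    have h := f.2.1.dist_le_mul t t₀
    rw [Real.dist_eq, f.2.2, sub_zero] at h
    simpa [Real.norm_eq_abs] using h)⟩

/-- Composition with `φ : Γ → Λ`, as a linear map `ℓ∞(Λ) → ℓ∞(Γ)`. -/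
noncomputable def linftyReindex {Γ Λ : Type*} (φ : Γ → Λ) :
    lp (fun _ : Λ => ℝ) ∞ →ₗ[ℝ] lp (fun _ : Γ => ℝ) ∞ where
  toFun v := ⟨fun γ => v (φ γ), memℓp_infty ⟨‖v‖, by
    rintro _ ⟨γ, rfl⟩
    exact lp.norm_apply_le_norm ENNReal.top_ne_zero v (φ γ)⟩⟩
  map_add' _ _ := rfl
  map_smul' _ _ := rfl

lemma norm_linftyReindex_le {Γ Λ : Type*} (φ : Γ → Λ) (v : lp (fun _ : Λ => ℝ) ∞) :
    ‖linftyReindex φ v‖ ≤ ‖v‖ :=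
  lp.norm_le_of_forall_le (norm_nonneg v) fun γ =>
    lp.norm_apply_le_norm ENNReal.top_ne_zero v (φ γ)

/-- The `γ`-th coordinate of `x ↦ I (g x - g t₀)`, as an element of the index set `𝓛`. -/
noncomputable def coordIndex {X : Type*} [MetricSpace X] (t₀ : X)
    {Z : Type*} [NormedAddCommGroup Z] [NormedSpace ℝ Z] {Γ : Type*}
    (I : Z →ₗᵢ[ℝ] lp (fun _ : Γ => ℝ) ∞) (g : X → Z) (hg : LipschitzWith 1 g) (γ : Γ) :
    LipL t₀ :=
  ⟨fun x => I (g x - g t₀) γ, by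
    refine ⟨LipschitzWith.of_dist_le_mul fun x y => ?_, by simp⟩
    have h := lp.norm_apply_le_norm ENNReal.top_ne_zero (I (g x - g t₀) - I (g y - g t₀)) γ
    rw [← map_sub, I.norm_map, sub_sub_sub_cancel_right, ← dist_eq_norm, map_sub] at h
    have h' : I (g x - g t₀) γ - I (g y - g t₀) γ = I (g x - g y) γ := by
      rw [← sub_sub_sub_cancel_right (g x) (g y) (g t₀), map_sub I (g x - g t₀)]
      rfl
    rw [dist_eq_norm, h', map_sub]
    exact h.trans (hg.dist_le_mul x y)⟩

/-- Let `Z` be a real normed space which is `λ`-injective (`λ ≥ 1`),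
witnessed by a linear isometry `I : Z → ℓ∞(Γ)` and a bounded linear projection
`P : ℓ∞(Γ) → Z` with `P ∘ I = id` and `‖P‖ ≤ λ`. Then every 1-Lipschitz `g : X → Z`
factors as `g = g̃ ∘ U` with `g̃ : ℓ∞(𝓛) → Z` affine (of the form `v ↦ L(v) + c`
with `L` linear) and `λ`-Lipschitz. -/
theorem universal_embedding_extend_injective {X : Type*} [MetricSpace X] (t₀ : X)
    {Z : Type*} [NormedAddCommGroup Z] [NormedSpace ℝ Z]
    (lam : ℝ≥0) (hlam : 1 ≤ lam) {Γ : Type*}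
    (I : Z →ₗᵢ[ℝ] lp (fun _ : Γ => ℝ) ∞)
    (P : lp (fun _ : Γ => ℝ) ∞ →L[ℝ] Z)
    (hPI : ∀ z : Z, P (I z) = z) (hP : ‖P‖ ≤ (lam : ℝ))
    (g : X → Z) (hg : LipschitzWith 1 g) :
    ∃ (L : lp (fun _ : LipL t₀ => ℝ) ∞ →ₗ[ℝ] Z) (c : Z),
      LipschitzWith lam (fun v => L v + c) ∧ ∀ x : X, g x = L (univEmb t₀ x) + c := by
  let R := linftyReindex (coordIndex t₀ I g hg)
  refine ⟨P.toLinearMap ∘ₗ R, g t₀, LipschitzWith.of_dist_le_mul fun v w => ?_, fun x => ?_⟩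
  · rw [dist_add_right, dist_eq_norm, dist_eq_norm, ← map_sub]
    calc ‖P (R (v - w))‖ ≤ ‖P‖ * ‖R (v - w)‖ := P.le_opNorm _
      _ ≤ lam * ‖v - w‖ := by
        gcongr
        exact norm_linftyReindex_le _ _
  · have hR : R (univEmb t₀ x) = I (g x - g t₀) := rfl
    simp [hR, hPI, -map_sub]
end

section
/- Every metric space satisfying the four-point inequality satisfies Reshetnyak's inequality: if (X,d) is a metric space such that for all x₁,x₂,x₃,x₄ ∈ X, d(x₁,x₂) + d(x₃,x₄) ≤ max{d(x₁,x₃) + d(x₂,x₄), d(x₁,x₄) + d(x₂,x₃)}, then for all x₁,x₂,x₃,x₄ ∈ X, d(x₁,x₂)² + d(x₃,x₄)² ≤ d(x₁,x₃)² + d(x₂,x₄)² + d(x₁,x₄)² + d(x₂,x₃)². -/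
/-!
Reshetnyak's inequality compares the diagonals `p = d(x₁,x₂)`, `q = d(x₃,x₄)` of a quadrilateral
with its sides. Write `p² + q² = ((p + q)² + (p - q)²) / 2`. By the four-point inequality `p + q`
is at most the sum of one pair of opposite sides, and by the triangle inequality `|p - q|` is at
most the sum of the other pair. Since `(a + b)² / 2 ≤ a² + b²`, the claim follows.
-/

theorem sq_add_sq_le_of_add_le_of_abs_sub_le {p q a b c e : ℝ} (hp : 0 ≤ p) (hq : 0 ≤ q)
    (hadd : p + q ≤ a + b) (hsub : |p - q| ≤ c + e) :
    p ^ 2 + q ^ 2 ≤ a ^ 2 + b ^ 2 + c ^ 2 + e ^ 2 := by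
  have h1 : (p + q) ^ 2 ≤ (a + b) ^ 2 := pow_le_pow_left₀ (add_nonneg hp hq) hadd 2
  have h2 : (p - q) ^ 2 ≤ (c + e) ^ 2 := sq_le_sq.2 (hsub.trans (le_abs_self _))
  nlinarith [sq_nonneg (a - b), sq_nonneg (c - e)]

/-- Both bounds are the triangle inequality along a path `w, y, z, x` or `y, w, x, z`. -/
theorem abs_dist_sub_dist_le_opposite_sides {X : Type*} [MetricSpace X] (w x y z : X) :
    |dist w x - dist y z| ≤ dist w y + dist x z := by
  have h1 := dist_triangle4 w y z x
  have h2 := dist_triangle4 y w x z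
  rw [dist_comm z x] at h1
  rw [dist_comm y w] at h2
  rw [abs_le]
  constructor <;> linarith

/-- Every metric space satisfying the four-point inequality
satisfies Reshetnyak's inequality. -/
theorem four_point_implies_reshetnyak {X : Type*} [MetricSpace X]
    (hfour : ∀ x₁ x₂ x₃ x₄ : X, dist x₁ x₂ + dist x₃ x₄ ≤
      max (dist x₁ x₃ + dist x₂ x₄) (dist x₁ x₄ + dist x₂ x₃)) :
    ∀ x₁ x₂ x₃ x₄ : X, dist x₁ x₂ ^ 2 + dist x₃ x₄ ^ 2 ≤
      dist x₁ x₃ ^ 2 + dist x₂ x₄ ^ 2 + dist x₁ x₄ ^ 2 + dist x₂ x₃ ^ 2 := by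
  intro x₁ x₂ x₃ x₄
  have hsub := abs_dist_sub_dist_le_opposite_sides x₁ x₂ x₃ x₄
  have hsub' := abs_dist_sub_dist_le_opposite_sides x₁ x₂ x₄ x₃
  rw [dist_comm x₄ x₃] at hsub'
  rcases le_max_iff.1 (hfour x₁ x₂ x₃ x₄) with h | h
  · exact sq_add_sq_le_of_add_le_of_abs_sub_le dist_nonneg dist_nonneg h hsub'
  · linarith [sq_add_sq_le_of_add_le_of_abs_sub_le dist_nonneg dist_nonneg h hsub]
end

section
/- Let T be a metric tree (geodesic metric space satisfying the four-point inequality). Let R > 0 and ε ∈ [0,2], and let a, x₁, x₂, m ∈ T satisfy d(a,x₁) ≤ R, d(a,x₂) ≤ R, d(x₁,x₂) ≥ Rε, and d(x₁,m) = d(m,x₂) = d(x₁,x₂)/2 (m is a midpoint of x₁ and x₂). Then d(a,m) ≤ R(1 − ε/2). In particular, the modulus of convexity of T satisfies δ_T(R,ε) ≥ 1 − ε/2. -/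
/-- In a metric tree (geodesic metric space satisfying the four-point
inequality): if `R > 0`, `ε ∈ [0,2]`, `d(a,x₁) ≤ R`, `d(a,x₂) ≤ R`, `d(x₁,x₂) ≥ Rε`,
and `m` is a midpoint of `x₁` and `x₂`, then `d(a,m) ≤ R(1 − ε/2)`; in particular the
modulus of convexity of the tree satisfies `δ(R,ε) ≥ 1 − ε/2`. -/
theorem metric_tree_modulus_of_convexity {T : Type*} [MetricSpace T]
    (hgeo : ∀ x y : T, ∃ γ : ℝ → T, γ 0 = x ∧ γ (dist x y) = y ∧
      ∀ s ∈ Set.Icc (0 : ℝ) (dist x y), ∀ t ∈ Set.Icc (0 : ℝ) (dist x y),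
        dist (γ s) (γ t) = |s - t|)
    (hfour : ∀ x₁ x₂ x₃ x₄ : T, dist x₁ x₂ + dist x₃ x₄ ≤
      max (dist x₁ x₃ + dist x₂ x₄) (dist x₁ x₄ + dist x₂ x₃))
    (R ε : ℝ) (hR : 0 < R) (hε : ε ∈ Set.Icc (0 : ℝ) 2)
    (a x₁ x₂ m : T) (h₁ : dist a x₁ ≤ R) (h₂ : dist a x₂ ≤ R)
    (h₁₂ : R * ε ≤ dist x₁ x₂)
    (hm₁ : dist x₁ m = dist x₁ x₂ / 2) (hm₂ : dist m x₂ = dist x₁ x₂ / 2) :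
    dist a m ≤ R * (1 - ε / 2) := by
  -- The four-point inequality for the pairing `{a, m}, {x₁, x₂}` gives
  -- `d(a,m) + d(x₁,x₂) ≤ R + d(x₁,x₂)/2`.
  have h := hfour a m x₁ x₂
  rw [dist_comm m x₁, hm₁, hm₂] at h
  rcases le_max_iff.mp h with h | h <;> linarith
end

section
/- Any metric space satisfying the four-point inequality has metric type 2 with constant 1: if (X,d) satisfies the four-point inequality, then for every n ≥ 1 and every function f from the discrete cube {−1,1}ⁿ to X, the sum over all ε in the cube of d(f(ε), f(−ε))² is at most the sum over all ε in the cube and all coordinates i of d(f(ε), f(ε^{[i]}))², where −ε negates every coordinate of ε and ε^{[i]} negates only the i-th coordinate of ε. -/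
/-!
The four-point inequality gives the quadrilateral inequality of roundness 2: the sum of the squares
of the two diagonals of a quadrilateral is at most the sum of the squares of its four sides
(`quadrilateral_le`). Roundness 2 implies the cube inequality by Enflo's induction on the dimension
(`cube_le`): for `ε` in the `n`-cube, apply the quadrilateral inequality to
`f(+,ε), f(-,ε), f(-,-ε), f(+,-ε)`. Its diagonals are antipodal pairs of the `(n+1)`-cube, two of its
sides are edges in the new direction, and the other two are antipodal pairs of the two facets, to
which the induction hypothesis applies.
-/

/-- If the sum of the diagonals is at most the sum of one pair of opposite sides, the difference of
the diagonals is at most the sum of the other pair by the triangle inequality; the claim follows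
from `2 (p² + q²) = (p + q)² + (p - q)²`. -/
lemma quadrilateral_le_of_diagonals_le {X : Type*} [MetricSpace X] (x y z w : X)
    (h : dist x z + dist y w ≤ dist x y + dist z w) :
    dist x z ^ 2 + dist y w ^ 2 ≤
      dist x y ^ 2 + dist y z ^ 2 + dist z w ^ 2 + dist w x ^ 2 := by
  have h₁ : dist x z - dist y w ≤ dist y z + dist w x := by
    have := dist_triangle x y z
    have := dist_triangle x w y
    rw [dist_comm w y, dist_comm x w] at this
    linarith
  have h₂ : -(dist y z + dist w x) ≤ dist x z - dist y w := by
    have := dist_triangle y x w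
    have := dist_triangle x z y
    rw [dist_comm y x, dist_comm x w] at *
    rw [dist_comm z y] at this
    linarith
  have h₃ : (dist x z - dist y w) ^ 2 ≤ (dist y z + dist w x) ^ 2 := sq_le_sq' h₂ h₁
  have h₄ : (dist x z + dist y w) ^ 2 ≤ (dist x y + dist z w) ^ 2 :=
    pow_le_pow_left₀ (by positivity) h 2
  nlinarith [sq_nonneg (dist x y - dist z w), sq_nonneg (dist y z - dist w x)]

/-- A space satisfying the four-point inequality has roundness 2. -/
lemma quadrilateral_le {X : Type*} [MetricSpace X]
    (hfour : ∀ x₁ x₂ x₃ x₄ : X, dist x₁ x₂ + dist x₃ x₄ ≤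
      max (dist x₁ x₃ + dist x₂ x₄) (dist x₁ x₄ + dist x₂ x₃)) (x y z w : X) :
    dist x z ^ 2 + dist y w ^ 2 ≤
      dist x y ^ 2 + dist y z ^ 2 + dist z w ^ 2 + dist w x ^ 2 := by
  rcases le_max_iff.1 (hfour x z y w) with h | h
  · exact quadrilateral_le_of_diagonals_le x y z w h
  · have := quadrilateral_le_of_diagonals_le x w z y (by rw [dist_comm w y]; exact h)
    rw [dist_comm w y, dist_comm x w, dist_comm w z, dist_comm z y, dist_comm y x] at this
    linarith

lemma sum_cube_succ (n : ℕ) (g : (Fin (n + 1) → Bool) → ℝ) :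
    ∑ ε, g ε = ∑ ε : Fin n → Bool, (g (Fin.cons true ε) + g (Fin.cons false ε)) := by
  rw [← (Fin.consEquiv fun _ : Fin (n + 1) => Bool).sum_comp g, Fintype.sum_prod_type,
    Fintype.sum_bool, Finset.sum_add_distrib]
  rfl

lemma sum_cube_neg (n : ℕ) (g : (Fin n → Bool) → ℝ) :
    ∑ ε : Fin n → Bool, g (fun i => !(ε i)) = ∑ ε, g ε :=
  (Equiv.piCongrRight fun _ : Fin n => Equiv.boolNot).sum_comp g

lemma neg_cons (n : ℕ) (b : Bool) (ε : Fin n → Bool) :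
    (fun i => !((Fin.cons b ε : Fin (n + 1) → Bool) i)) =
      (Fin.cons (!b) (fun i => !(ε i)) : Fin (n + 1) → Bool) := by
  funext i
  refine Fin.cases ?_ (fun j => ?_) i <;> simp

/-- Enflo's induction: roundness 2 implies the cube inequality in every dimension. -/
lemma cube_le {X : Type*} [MetricSpace X]
    (hquad : ∀ x y z w : X, dist x z ^ 2 + dist y w ^ 2 ≤
      dist x y ^ 2 + dist y z ^ 2 + dist z w ^ 2 + dist w x ^ 2)
    (n : ℕ) (f : (Fin n → Bool) → X) :
    ∑ ε : Fin n → Bool, dist (f ε) (f (fun i => !(ε i))) ^ 2 ≤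
      ∑ ε : Fin n → Bool, ∑ i : Fin n,
        dist (f ε) (f (Function.update ε i (!(ε i)))) ^ 2 := by
  induction n with
  | zero =>
    have h : ∀ ε : Fin 0 → Bool, (fun i => !(ε i)) = ε := fun ε => Subsingleton.elim _ _
    simp [h]
  | succ n ih =>
    have hp := ih fun ε => f (Fin.cons true ε)
    have hm := ih fun ε => f (Fin.cons false ε)
    -- The edges in the new direction at `ε` and at `-ε` contribute the same total.
    have hv := sum_cube_neg n fun ε => dist (f (Fin.cons true ε)) (f (Fin.cons false ε)) ^ 2
    have hq := Finset.sum_le_sum fun (ε : Fin n → Bool) (_ : ε ∈ Finset.univ) =>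
      hquad (f (Fin.cons true ε)) (f (Fin.cons false ε))
        (f (Fin.cons false fun i => !(ε i))) (f (Fin.cons true fun i => !(ε i)))
    rw [sum_cube_succ, sum_cube_succ]
    simp only [neg_cons, Fin.sum_univ_succ, Fin.cons_zero, Fin.cons_succ, Fin.update_cons_zero,
      ← Fin.cons_update, Bool.not_true, Bool.not_false, Finset.sum_add_distrib] at *
    simp only [dist_comm (f (Fin.cons false _)) (f (Fin.cons true _)),
      dist_comm (f (Fin.cons true fun i => !(_ : Fin n → Bool) i)) (f (Fin.cons true _))] at *
    linarith

/-- Any metric space satisfying the four-point inequality has metric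
(BMW) type 2 with constant 1: for every `n ≥ 1` and every `f : {−1,1}ⁿ → X`,
`Σ_ε d(f(ε), f(−ε))² ≤ Σ_ε Σ_i d(f(ε), f(ε^{[i]}))²`, where `−ε` negates every
coordinate and `ε^{[i]}` negates the `i`-th coordinate only. -/
theorem four_point_metric_type_two {X : Type*} [MetricSpace X]
    (hfour : ∀ x₁ x₂ x₃ x₄ : X, dist x₁ x₂ + dist x₃ x₄ ≤
      max (dist x₁ x₃ + dist x₂ x₄) (dist x₁ x₄ + dist x₂ x₃))
    (n : ℕ) (hn : 1 ≤ n) (f : (Fin n → Bool) → X) :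
    ∑ ε : Fin n → Bool, dist (f ε) (f (fun i => !(ε i))) ^ 2 ≤
      ∑ ε : Fin n → Bool, ∑ i : Fin n,
        dist (f ε) (f (Function.update ε i (!(ε i)))) ^ 2 := by
  exact cube_le (quadrilateral_le hfour) n f
end

section
/- For p > 1, the spider with n legs of length 1 fails to have negative type p once n > 2^p/(2^p − 2). Precisely: let p > 1 be real and n ∈ ℕ with n > 2^p/(2^p − 2), and define D : Fin (n+1) → Fin (n+1) → ℝ by D(i,j) = 0 if i = j, D(i,j) = 1 if exactly one of i, j equals 0, and D(i,j) = 2 otherwise (these are the distances among the center t₀ and the endpoints t₁,…,tₙ of the spider with n unit legs). Then there exists ξ : Fin (n+1) → ℝ with Σᵢ ξᵢ = 0 and Σᵢ Σⱼ D(i,j)^p · ξᵢ · ξⱼ > 0. -/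
/-!
Put weight `-n` on the center and weight `1` on each endpoint. The weights sum to zero, and the
quadratic form equals `-2n² + n(n-1)2^p = n (n (2^p - 2) - 2^p)`: the center contributes `2n` pairs
at distance `1`, and there are `n(n-1)` ordered pairs of distinct endpoints at distance `2`.
Since `2^p > 2`, this is positive exactly when `n > 2^p / (2^p - 2)`.
-/

open Finset

/-- The distance matrix of the spider with `n` unit legs, on the points
`t₀` (the center, index `0`) and the endpoints `t₁, …, tₙ`. -/
noncomputable def spiderDist (n : ℕ) (i j : Fin (n + 1)) : ℝ :=
  if i = j then 0 else if i = 0 ∨ j = 0 then 1 else 2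

/-- For `p > 1`, the spider with `n` unit legs fails to have negative
type `p` once `n > 2^p/(2^p − 2)`: there is `ξ` with `Σᵢ ξᵢ = 0` and
`Σᵢⱼ d(tᵢ,tⱼ)^p ξᵢ ξⱼ > 0`. -/
theorem spider_fails_negative_type (p : ℝ) (hp : 1 < p) (n : ℕ)
    (hn : (2 : ℝ) ^ p / ((2 : ℝ) ^ p - 2) < n) :
    ∃ ξ : Fin (n + 1) → ℝ, ∑ i, ξ i = 0 ∧
      0 < ∑ i, ∑ j, spiderDist n i j ^ p * ξ i * ξ j := by
  have hp0 : p ≠ 0 := by linarith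
  have h2 : (2 : ℝ) < 2 ^ p := by
    simpa using Real.rpow_lt_rpow_of_exponent_lt (by norm_num : (1 : ℝ) < 2) hp
  have hn0 : (0 : ℝ) < n :=
    lt_trans (div_pos (by linarith) (by linarith)) hn
  have hpos : (2 : ℝ) ^ p < n * (2 ^ p - 2) := (div_lt_iff₀ (by linarith)).1 hn
  refine ⟨Fin.cons (-(n : ℝ)) (fun _ => 1), by simp [Fin.sum_univ_succ], ?_⟩
  have h00 : spiderDist n 0 0 ^ p = 0 := by simp [spiderDist, hp0]
  have h0s (j : Fin n) : spiderDist n 0 j.succ ^ p = 1 := by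
    simp [spiderDist, (Fin.succ_ne_zero j).symm]
  have hs0 (i : Fin n) : spiderDist n i.succ 0 ^ p = 1 := by simp [spiderDist]
  -- Subtracting the diagonal from a constant makes the double sum over endpoints immediate.
  have hss (i j : Fin n) :
      spiderDist n i.succ j.succ ^ p = 2 ^ p - if i = j then (2 : ℝ) ^ p else 0 := by
    by_cases h : i = j <;> simp [spiderDist, h, hp0]
  have key : ∑ i, ∑ j, spiderDist n i j ^ p * (Fin.cons (-(n : ℝ)) (fun _ => 1) : Fin (n + 1) → ℝ) i
      * (Fin.cons (-(n : ℝ)) (fun _ => 1) : Fin (n + 1) → ℝ) j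
      = n * (n * (2 ^ p - 2) - 2 ^ p) := by
    simp only [Fin.sum_univ_succ, Fin.cons_zero, Fin.cons_succ, h00, h0s, hs0, hss, mul_one,
      Finset.sum_sub_distrib, Finset.sum_add_distrib, Finset.sum_ite_eq, Finset.mem_univ,
      if_true, Finset.sum_const, Finset.card_univ, Fintype.card_fin, nsmul_eq_mul]
    ring
  rw [key]
  exact mul_pos hn0 (by linarith)
end

section
/- Let T be a hyperconvex metric space satisfying the four-point inequality (for example, a complete metric tree), X a real normed space, J : T → X an isometric embedding, and x̃ ∈ X. Let P(x̃) = {x₀ ∈ T : there exists a 1-Lipschitz map π : X → T with π(J(t)) = t for all t ∈ T and π(x̃) = x₀}. Then P(x̃) is a closed subset of T, and it is metrically convex: for all x₁, x₂ ∈ P(x̃) and every z ∈ T with d(x₁,z) + d(z,x₂) = d(x₁,x₂), one has z ∈ P(x̃). -/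
/-!
A point `x₀` lies in `P(xt)` if and only if `dist x₀ t ≤ dist xt (J t)` for all `t : T`
(`exists_retraction_iff`). This exhibits `P(xt)` as an intersection of closed balls, and in a
space with the four-point inequality closed balls are metrically convex.

Necessity in the characterization is the Lipschitz bound. For sufficiency, the partial map
`J t ↦ t`, `xt ↦ x₀` is 1-Lipschitz, and Zorn's lemma together with one-point extensions extends
it to all of `X`. A one-point extension amounts to a common point of a family of pairwise
compatible balls indexed by a subset of `X × T`.

The definition of `Hyperconvex` only speaks of families indexed by types in one universe, which
need not contain `X` or `T`. With the four-point inequality this is harmless: countable families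
suffice (`exists_mem_closedBalls`). Fix a center `p` and let `S` be the supremum of
`dist p (x i) - r i`. If `S < 0` then `p` is in every ball; otherwise a common point of
`closedBall p S` and a sequence of balls along which the supremum is approached lies in all balls.
-/

/-- A metric space is hyperconvex if every family of mutually intersecting closed balls
(`d(xᵢ,xⱼ) ≤ rᵢ + rⱼ`) has a common point. -/
def Hyperconvex (T : Type*) [MetricSpace T] : Prop :=
  ∀ (ι : Type*) (x : ι → T) (r : ι → ℝ), (∀ i, 0 ≤ r i) →
    (∀ i j, dist (x i) (x j) ≤ r i + r j) →
    (⋂ i, Metric.closedBall (x i) (r i)).Nonempty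

/-- The four-point inequality reduces the intersection property for arbitrary families of balls,
with index type in any universe, to countable families. -/
lemma exists_mem_closedBalls {T : Type*} [MetricSpace T] (hT : Hyperconvex T)
    (hfour : ∀ x₁ x₂ x₃ x₄ : T, dist x₁ x₂ + dist x₃ x₄ ≤
      max (dist x₁ x₃ + dist x₂ x₄) (dist x₁ x₄ + dist x₂ x₃))
    {ι : Type*} [Nonempty ι] (x : ι → T) (r : ι → ℝ) (hr : ∀ i, 0 ≤ r i)
    (h : ∀ i j, dist (x i) (x j) ≤ r i + r j) :
    ∃ y, ∀ i, dist y (x i) ≤ r i := by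
  obtain ⟨i₀⟩ := ‹Nonempty ι›
  set p := x i₀ with hp
  set S := ⨆ i, (dist p (x i) - r i) with hS
  have hbdd : BddAbove (Set.range fun i => dist p (x i) - r i) := by
    refine ⟨r i₀, ?_⟩
    rintro _ ⟨i, rfl⟩
    have := h i₀ i
    simp only
    linarith
  have hle : ∀ i, dist p (x i) - r i ≤ S := fun i => le_ciSup hbdd i
  rcases lt_or_ge S 0 with hneg | hpos
  · exact ⟨p, fun i => by linarith [hle i]⟩
  have happrox : ∀ n : ℕ, ∃ i, S - 1 / ((n : ℝ) + 1) < dist p (x i) - r i := fun n => by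
    have : Nonempty ι := ⟨i₀⟩
    exact exists_lt_of_lt_ciSup (sub_lt_self S Nat.one_div_pos_of_nat)
  choose u hu using happrox
  -- `none` stands for the ball of radius `S` about `p`, `some n` for the `u n`-th ball.
  obtain ⟨y, hy⟩ := hT (ULift (Option ℕ))
    (fun k => k.down.elim p fun n => x (u n)) (fun k => k.down.elim S fun n => r (u n))
    (by rintro ⟨_ | n⟩ <;> simp [hpos, hr])
    (by
      rintro ⟨_ | m⟩ ⟨_ | n⟩
      · simpa using hpos
      · have := hle (u n)
        simp only [Option.elim]
        linarith
      · have := hle (u m)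
        simp only [Option.elim]
        rw [dist_comm]
        linarith
      · exact h _ _)
  rw [Set.mem_iInter] at hy
  have hyp : dist y p ≤ S := hy ⟨none⟩
  have hyu : ∀ n, dist y (x (u n)) ≤ r (u n) := fun n => hy ⟨some n⟩
  refine ⟨y, fun i => le_of_forall_pos_le_add fun ε hε => ?_⟩
  obtain ⟨n, hn⟩ := exists_nat_one_div_lt hε
  have h1 := hfour y (x i) p (x (u n))
  have h2 : max (dist y p + dist (x i) (x (u n))) (dist y (x (u n)) + dist (x i) p)
      ≤ S + r i + r (u n) := by
    apply max_le
    · linarith [h i (u n)]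
    · linarith [hyu n, hle i, dist_comm (x i) p]
  linarith [hu n]

/-- A 1-Lipschitz partial map into `T`, given by its graph `G`, extends to a 1-Lipschitz map on
the whole space. -/
lemma exists_lipschitz_extension {T X : Type*} [MetricSpace T] [PseudoMetricSpace X]
    (hT : Hyperconvex T)
    (hfour : ∀ x₁ x₂ x₃ x₄ : T, dist x₁ x₂ + dist x₃ x₄ ≤
      max (dist x₁ x₃ + dist x₂ x₄) (dist x₁ x₄ + dist x₂ x₃))
    (G : Set (X × T)) (hne : G.Nonempty)
    (hG : ∀ a ∈ G, ∀ b ∈ G, dist a.2 b.2 ≤ dist a.1 b.1) :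
    ∃ π : X → T, LipschitzWith 1 π ∧ ∀ a ∈ G, π a.1 = a.2 := by
  obtain ⟨M, hGM, hM⟩ := zorn_subset_nonempty
    {M : Set (X × T) | ∀ a ∈ M, ∀ b ∈ M, dist a.2 b.2 ≤ dist a.1 b.1}
    (by
      intro c hc hchain _
      refine ⟨⋃₀ c, ?_, fun s hs => Set.subset_sUnion_of_mem hs⟩
      rintro a ⟨s, hs, has⟩ b ⟨t, ht, hbt⟩
      rcases hchain.total hs ht with hst | hts
      · exact hc ht a (hst has) b hbt
      · exact hc hs a has b (hts hbt)) G hG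
  have hMlip : ∀ a ∈ M, ∀ b ∈ M, dist a.2 b.2 ≤ dist a.1 b.1 := hM.prop
  have htotal : ∀ x : X, ∃ y : T, (x, y) ∈ M := by
    intro x
    have : Nonempty M := (hne.mono hGM).to_subtype
    obtain ⟨y, hy⟩ := exists_mem_closedBalls hT hfour (fun m : M => m.1.2)
      (fun m : M => dist x m.1.1) (fun _ => dist_nonneg)
      (fun a b => (hMlip a a.2 b b.2).trans (dist_triangle_left _ _ _))
    refine ⟨y, hM.le_of_ge (y := insert (x, y) M) ?_ (Set.subset_insert _ _)
      (Set.mem_insert _ _)⟩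
    rintro a (rfl | ha) b (rfl | hb)
    · simp
    · exact hy ⟨b, hb⟩
    · rw [dist_comm, dist_comm a.1]
      exact hy ⟨a, ha⟩
    · exact hMlip a ha b hb
  choose π hπ using htotal
  refine ⟨π, LipschitzWith.mk_one fun x y => hMlip _ (hπ x) _ (hπ y), fun a ha => ?_⟩
  have := hMlip _ (hπ a.1) a (hGM ha)
  rw [dist_self] at this
  exact dist_le_zero.mp this

/-- `P(xt)` is the intersection of the closed balls about `t` of radius `dist xt (J t)`. -/
lemma exists_retraction_iff {T X : Type*} [MetricSpace T] [PseudoMetricSpace X]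
    (hT : Hyperconvex T)
    (hfour : ∀ x₁ x₂ x₃ x₄ : T, dist x₁ x₂ + dist x₃ x₄ ≤
      max (dist x₁ x₃ + dist x₂ x₄) (dist x₁ x₄ + dist x₂ x₃))
    (J : T → X) (hJ : Isometry J) (xt : X) (x₀ : T) :
    (∃ π : X → T, LipschitzWith 1 π ∧ (∀ t : T, π (J t) = t) ∧ π xt = x₀) ↔
      ∀ t, dist x₀ t ≤ dist xt (J t) := by
  constructor
  · rintro ⟨π, hπ, hret, rfl⟩ t
    simpa [hret] using hπ.dist_le_mul xt (J t)
  · intro h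
    obtain ⟨π, hπ, hext⟩ := exists_lipschitz_extension hT hfour
      (insert (xt, x₀) (Set.range fun t => (J t, t))) (Set.insert_nonempty _ _) (by
        rintro _ (rfl | ⟨s, rfl⟩) _ (rfl | ⟨t, rfl⟩)
        · simp
        · exact h t
        · simpa [dist_comm] using h s
        · exact (hJ.dist_eq s t).ge)
    exact ⟨π, hπ, fun t => hext (J t, t) (Or.inr ⟨t, rfl⟩), hext (xt, x₀) (Or.inl rfl)⟩

/-- Let `T` be a hyperconvex metric space satisfying the four-point
inequality (e.g. a complete metric tree), `J : T → X` an isometric embedding into a real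
normed space, and `xt ∈ X`. Then the set `P(xt)` of images of `xt` under contractive
retractions `X → T` is closed and metrically convex. -/
theorem retraction_images_closed_and_convex {T X : Type*} [MetricSpace T]
    [NormedAddCommGroup X] [NormedSpace ℝ X]
    (hT : Hyperconvex T)
    (hfour : ∀ x₁ x₂ x₃ x₄ : T, dist x₁ x₂ + dist x₃ x₄ ≤
      max (dist x₁ x₃ + dist x₂ x₄) (dist x₁ x₄ + dist x₂ x₃))
    (J : T → X) (hJ : Isometry J) (xt : X) :
    IsClosed {x₀ : T | ∃ π : X → T, LipschitzWith 1 π ∧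
        (∀ t : T, π (J t) = t) ∧ π xt = x₀} ∧
    (∀ x₁ ∈ {x₀ : T | ∃ π : X → T, LipschitzWith 1 π ∧
        (∀ t : T, π (J t) = t) ∧ π xt = x₀},
      ∀ x₂ ∈ {x₀ : T | ∃ π : X → T, LipschitzWith 1 π ∧
        (∀ t : T, π (J t) = t) ∧ π xt = x₀},
      ∀ z : T, dist x₁ z + dist z x₂ = dist x₁ x₂ →
        z ∈ {x₀ : T | ∃ π : X → T, LipschitzWith 1 π ∧
          (∀ t : T, π (J t) = t) ∧ π xt = x₀}) := by
  simp only [exists_retraction_iff hT hfour J hJ xt, Set.mem_ofPred_eq]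
  constructor
  · rw [Set.ofPred_forall]
    exact isClosed_iInter fun t => isClosed_le (by fun_prop) continuous_const
  · intro x₁ h₁ x₂ h₂ z hz t
    rcases le_max_iff.mp (hfour z t x₁ x₂) with h | h
    · linarith [h₂ t, dist_nonneg (x := z) (y := x₂), dist_comm x₁ z, dist_comm x₂ t]
    · linarith [h₁ t, dist_nonneg (x := x₁) (y := z), dist_comm x₁ t]
end

section
/- Every complete metric tree is centered: if T is a complete metric tree (complete geodesic metric space satisfying the four-point inequality), then for every bounded subset U ⊆ T there exists z ∈ T such that U ⊆ closedBall(z, diam(U)/2), i.e., d(u,z) ≤ diam(U)/2 for all u ∈ U. -/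
/-!
Let `D = diam U`. If `x, y ∈ U` satisfy `D - ε ≤ dist x y` and `m` is the midpoint of a geodesic
from `x` to `y`, the four-point inequality for `u, m, x, y` gives `dist u m ≤ D / 2 + ε / 2` for
every `u ∈ U`. Applied to two such midpoints `m, m'`, with tolerances `ε, ε'`, it also gives
`dist m m' ≤ (ε + ε') / 2`. Hence the midpoints of pairs that nearly realize the diameter form a
Cauchy sequence as `ε → 0`, and its limit is the required center.
-/

/-- The four-point inequality bounds the distance to a midpoint `m` of `x, y`. It is used both for
points `p` of the given set and for midpoints `p` of other pairs. -/
lemma dist_midpoint_le_of_fourPoint {T : Type*} [MetricSpace T]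
    (hfour : ∀ x₁ x₂ x₃ x₄ : T, dist x₁ x₂ + dist x₃ x₄ ≤
      max (dist x₁ x₃ + dist x₂ x₄) (dist x₁ x₄ + dist x₂ x₃))
    {x y m p : T} {R : ℝ} (hx : dist m x = dist x y / 2) (hy : dist m y = dist x y / 2)
    (hpx : dist p x ≤ R) (hpy : dist p y ≤ R) : dist p m ≤ R - dist x y / 2 := by
  rcases le_max_iff.mp (hfour p m x y) with h | h <;> linarith

/-- Every complete metric tree (complete geodesic metric space
satisfying the four-point inequality) is centered: every bounded subset `U` is contained
in a closed ball of radius `diam(U)/2` centered at some point of the tree. -/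
theorem complete_metric_tree_centered {T : Type*} [MetricSpace T] [CompleteSpace T] [Nonempty T]
    (hgeo : ∀ x y : T, ∃ γ : ℝ → T, γ 0 = x ∧ γ (dist x y) = y ∧
      ∀ s ∈ Set.Icc (0 : ℝ) (dist x y), ∀ t ∈ Set.Icc (0 : ℝ) (dist x y),
        dist (γ s) (γ t) = |s - t|)
    (hfour : ∀ x₁ x₂ x₃ x₄ : T, dist x₁ x₂ + dist x₃ x₄ ≤
      max (dist x₁ x₃ + dist x₂ x₄) (dist x₁ x₄ + dist x₂ x₃))
    (U : Set T) (hU : Bornology.IsBounded U) :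
    ∃ z : T, ∀ u ∈ U, dist u z ≤ Metric.diam U / 2 := by
  rcases U.eq_empty_or_nonempty with rfl | hne
  · exact ⟨Classical.arbitrary T, by simp⟩
  have mid : ∀ x y : T, ∃ m : T, dist m x = dist x y / 2 ∧ dist m y = dist x y / 2 := by
    intro x y
    obtain ⟨γ, h0, h1, h⟩ := hgeo x y
    have hd : 0 ≤ dist x y := dist_nonneg
    refine ⟨γ (dist x y / 2), ?_, ?_⟩
    · have := h (dist x y / 2) ⟨by linarith, by linarith⟩ 0 ⟨le_rfl, hd⟩
      rw [h0, sub_zero, abs_of_nonneg (by linarith)] at this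
      exact this
    · have := h (dist x y / 2) ⟨by linarith, by linarith⟩ (dist x y) ⟨hd, le_rfl⟩
      rw [h1, abs_of_nonpos (by linarith)] at this
      linarith
  have pair : ∀ ε : ℝ, 0 < ε → ∃ x ∈ U, ∃ y ∈ U, Metric.diam U - ε ≤ dist x y := by
    intro ε hε
    by_contra! hcon
    have := Metric.diam_le_of_forall_dist_le_of_nonempty hne
      (fun x hx y hy => (hcon x hx y hy).le)
    linarith
  have hε : ∀ n : ℕ, (0 : ℝ) < 1 / ((n : ℝ) + 1) := fun n => Nat.one_div_pos_of_nat
  choose x hx y hy hxy using fun n : ℕ => pair _ (hε n)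
  choose m hmx hmy using fun n : ℕ => mid (x n) (y n)
  have near : ∀ n, ∀ u ∈ U, dist u (m n) ≤ Metric.diam U / 2 + 1 / ((n : ℝ) + 1) / 2 := by
    intro n u hu
    have := dist_midpoint_le_of_fourPoint hfour (hmx n) (hmy n)
      (Metric.dist_le_diam_of_mem hU hu (hx n)) (Metric.dist_le_diam_of_mem hU hu (hy n))
    linarith [hxy n]
  have close : ∀ n k, dist (m n) (m k) ≤ 1 / ((n : ℝ) + 1) / 2 + 1 / ((k : ℝ) + 1) / 2 := by
    intro n k
    have h1 := near n (x k) (hx k)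
    have h2 := near n (y k) (hy k)
    rw [dist_comm] at h1 h2
    have := dist_midpoint_le_of_fourPoint hfour (hmx k) (hmy k) h1 h2
    linarith [hxy k]
  have hlim : Filter.Tendsto (fun n : ℕ => 1 / ((n : ℝ) + 1)) Filter.atTop (nhds 0) :=
    tendsto_one_div_add_atTop_nhds_zero_nat
  have hcauchy : CauchySeq m := by
    refine cauchySeq_of_le_tendsto_0 _ (fun n k N hn hk => ?_) hlim
    have h1 : 1 / ((n : ℝ) + 1) ≤ 1 / ((N : ℝ) + 1) := Nat.one_div_le_one_div hn
    have h2 : 1 / ((k : ℝ) + 1) ≤ 1 / ((N : ℝ) + 1) := Nat.one_div_le_one_div hk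
    linarith [close n k]
  obtain ⟨z, hz⟩ := cauchySeq_tendsto_of_complete hcauchy
  refine ⟨z, fun u hu => ?_⟩
  have hR : Filter.Tendsto (fun n : ℕ => Metric.diam U / 2 + 1 / ((n : ℝ) + 1) / 2)
      Filter.atTop (nhds (Metric.diam U / 2)) := by
    simpa using (hlim.div_const 2).const_add (Metric.diam U / 2)
  exact le_of_tendsto_of_tendsto' (tendsto_const_nhds.dist hz) hR (fun n => near n u hu)
end

section
/- Let T be a metric tree (geodesic metric space satisfying the four-point inequality) and let A ⊆ T be a nonempty bounded subset. Then for every ε > 0 there exists a point m in the metric convex hull con(A) of A such that d(a,m) < diam(A)/2 + ε for all a ∈ A. -/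
/-!
Choose `x, y ∈ A` with `d(x,y) > diam A - 2ε` and let `m` be the midpoint of a geodesic from `x`
to `y`; it lies between two points of `A`, hence in the hull. For `a ∈ A` the four-point inequality
gives
`d(a,m) + d(x,y) ≤ max {d(a,x) + d(m,y), d(a,y) + d(m,x)} ≤ diam A + d(x,y)/2`,
so `d(a,m) ≤ diam A - d(x,y)/2 < diam A/2 + ε`.
-/

/-- A subset `S` of a metric space is metrically convex if together with any two of its
points it contains every point metrically between them. -/
def MetricConvex {T : Type*} [MetricSpace T] (S : Set T) : Prop :=
  ∀ x ∈ S, ∀ y ∈ S, ∀ z : T, dist x z + dist z y = dist x y → z ∈ S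

/-- The metric convex hull of a set: the intersection of all metrically convex sets
containing it. -/
def metricConvexHull {T : Type*} [MetricSpace T] (A : Set T) : Set T :=
  ⋂₀ {S : Set T | MetricConvex S ∧ A ⊆ S}

/-- In a metric tree (geodesic metric space satisfying the four-point
inequality), for every nonempty bounded `A` and every `ε > 0` there is a point `m` of
the metric convex hull of `A` with `d(a,m) < diam(A)/2 + ε` for all `a ∈ A`. -/
theorem almost_center_in_convex_hull {T : Type*} [MetricSpace T]
    (hgeo : ∀ x y : T, ∃ γ : ℝ → T, γ 0 = x ∧ γ (dist x y) = y ∧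
      ∀ s ∈ Set.Icc (0 : ℝ) (dist x y), ∀ t ∈ Set.Icc (0 : ℝ) (dist x y),
        dist (γ s) (γ t) = |s - t|)
    (hfour : ∀ x₁ x₂ x₃ x₄ : T, dist x₁ x₂ + dist x₃ x₄ ≤
      max (dist x₁ x₃ + dist x₂ x₄) (dist x₁ x₄ + dist x₂ x₃))
    (A : Set T) (hA : A.Nonempty) (hAb : Bornology.IsBounded A)
    (ε : ℝ) (hε : 0 < ε) :
    ∃ m ∈ metricConvexHull A, ∀ a ∈ A, dist a m < Metric.diam A / 2 + ε := by
  obtain ⟨x, hx, y, hy, hxy⟩ : ∃ x ∈ A, ∃ y ∈ A, Metric.diam A - 2 * ε < dist x y := by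
    by_contra! h
    obtain ⟨a, ha⟩ := hA
    -- Nonnegativity of the bound, required by `Metric.diam_le_of_forall_dist_le`.
    have h0 : 0 ≤ Metric.diam A - 2 * ε := dist_self a ▸ h a ha a ha
    have := Metric.diam_le_of_forall_dist_le h0 h
    linarith
  obtain ⟨γ, h0, h1, hγ⟩ := hgeo x y
  have hd : 0 ≤ dist x y := dist_nonneg
  have hmid : dist x y / 2 ∈ Set.Icc (0 : ℝ) (dist x y) := ⟨by linarith, by linarith⟩
  have hxm : dist x (γ (dist x y / 2)) = dist x y / 2 := by
    have := hγ 0 ⟨le_rfl, hd⟩ _ hmid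
    rwa [h0, zero_sub, abs_neg, abs_of_nonneg hmid.1] at this
  have hmy : dist (γ (dist x y / 2)) y = dist x y / 2 := by
    have := hγ _ hmid _ ⟨hd, le_rfl⟩
    rw [h1, abs_sub_comm, abs_of_nonneg (by linarith)] at this
    linarith
  refine ⟨γ (dist x y / 2), ?_, fun a ha => ?_⟩
  · rintro S ⟨hS, hAS⟩
    exact hS x (hAS hx) y (hAS hy) _ (by linarith)
  · have hax := Metric.dist_le_diam_of_mem hAb ha hx
    have hay := Metric.dist_le_diam_of_mem hAb ha hy
    have h4 := hfour a (γ (dist x y / 2)) x y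
    rw [dist_comm x] at hxm
    rcases le_max_iff.1 h4 with h | h <;> linarith
end

section
/- In a complete metric tree, ε-covers and ε-nets have the same minimal cardinality: let T be a complete metric tree (complete geodesic metric space satisfying the four-point inequality), A ⊆ T, ε > 0 and n ∈ ℕ. Then A can be covered by n subsets of T each of diameter at most 2ε if and only if there exist n points t₁,…,tₙ ∈ T with A ⊆ ⋃ᵢ closedBall(tᵢ, ε). -/
/-!
Balls of radius `ε` have diameter at most `2ε`, so a net gives a cover. Conversely it suffices to
place every set `U` of diameter `D ≤ 2ε` in a closed ball of radius `ε`. If `x, y ∈ U` satisfy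
`D - δ ≤ d(x, y)` and `m` is a midpoint of `x` and `y`, the four-point inequality for `u, m, x, y`
gives `d(u, m) ≤ D - d(x, y) / 2 ≤ D / 2 + δ / 2` for every `u ∈ U`. The same inequality, applied
to two such midpoints, bounds their distance by `δ`. Hence midpoints of pairs realizing `D` up to
`1 / (k + 1)` form a Cauchy sequence, and its limit is within `D / 2 ≤ ε` of every point of `U`
(`exists_center`).
-/

/-- The four-point inequality when one point `m` is a midpoint of two others: the distance from `u`
to `m` is controlled by the distances from `u` to the endpoints. -/
lemma dist_midpoint_le {T : Type*} [MetricSpace T]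
    (hfour : ∀ x₁ x₂ x₃ x₄ : T, dist x₁ x₂ + dist x₃ x₄ ≤
      max (dist x₁ x₃ + dist x₂ x₄) (dist x₁ x₄ + dist x₂ x₃))
    {u m x y : T} {r : ℝ} (hmx : dist m x = dist x y / 2) (hmy : dist m y = dist x y / 2)
    (hux : dist u x ≤ r) (huy : dist u y ≤ r) : dist u m ≤ r - dist x y / 2 := by
  rcases le_max_iff.mp (hfour u m x y) with h | h <;> linarith

/-- In a complete metric tree, a nonempty set of diameter at most `2ε` lies in a closed ball of
radius `ε`. -/
lemma exists_center {T : Type*} [MetricSpace T] [CompleteSpace T]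
    (hgeo : ∀ x y : T, ∃ γ : ℝ → T, γ 0 = x ∧ γ (dist x y) = y ∧
      ∀ s ∈ Set.Icc (0 : ℝ) (dist x y), ∀ t ∈ Set.Icc (0 : ℝ) (dist x y),
        dist (γ s) (γ t) = |s - t|)
    (hfour : ∀ x₁ x₂ x₃ x₄ : T, dist x₁ x₂ + dist x₃ x₄ ≤
      max (dist x₁ x₃ + dist x₂ x₄) (dist x₁ x₄ + dist x₂ x₃))
    {U : Set T} (hne : U.Nonempty) {ε : ℝ} (hU : ∀ x ∈ U, ∀ y ∈ U, dist x y ≤ 2 * ε) :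
    ∃ c : T, U ⊆ Metric.closedBall c ε := by
  have hmid : ∀ x y : T, ∃ m : T, dist m x = dist x y / 2 ∧ dist m y = dist x y / 2 := by
    intro x y
    obtain ⟨γ, h0, h1, hγ⟩ := hgeo x y
    have hd : 0 ≤ dist x y := dist_nonneg
    have hm : dist x y / 2 ∈ Set.Icc (0 : ℝ) (dist x y) := ⟨by linarith, by linarith⟩
    refine ⟨γ (dist x y / 2), ?_, ?_⟩
    · have h := hγ _ hm 0 ⟨le_rfl, hd⟩
      rw [h0, sub_zero, abs_of_nonneg hm.1] at h
      exact h
    · have h := hγ _ hm (dist x y) ⟨hd, le_rfl⟩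
      rw [h1, abs_of_nonpos (by linarith)] at h
      linarith
  set S : Set ℝ := {d | ∃ x ∈ U, ∃ y ∈ U, dist x y = d} with hS
  obtain ⟨a, ha⟩ := hne
  have hSne : S.Nonempty := ⟨_, a, ha, a, ha, rfl⟩
  have hSle : ∀ d ∈ S, d ≤ 2 * ε := by
    rintro d ⟨x, hx, y, hy, rfl⟩
    exact hU x hx y hy
  set D := sSup S with hD
  have hDε : D ≤ 2 * ε := csSup_le hSne hSle
  have hUD : ∀ x ∈ U, ∀ y ∈ U, dist x y ≤ D := fun x hx y hy =>
    le_csSup ⟨2 * ε, hSle⟩ ⟨x, hx, y, hy, rfl⟩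
  have hpair : ∀ k : ℕ, ∃ x ∈ U, ∃ y ∈ U, D - 1 / ((k : ℝ) + 1) < dist x y := by
    intro k
    have hk : (0 : ℝ) < 1 / ((k : ℝ) + 1) := by positivity
    obtain ⟨d, ⟨x, hx, y, hy, rfl⟩, h⟩ := exists_lt_of_lt_csSup hSne (sub_lt_self D hk)
    exact ⟨x, hx, y, hy, h⟩
  choose x hx y hy hxy using hpair
  choose m hmx hmy using fun k => hmid (x k) (y k)
  have hum : ∀ k, ∀ u ∈ U, dist u (m k) ≤ D / 2 + 1 / ((k : ℝ) + 1) / 2 := by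
    intro k u hu
    have h := dist_midpoint_le hfour (hmx k) (hmy k) (hUD u hu _ (hx k)) (hUD u hu _ (hy k))
    linarith [hxy k]
  have hlim := tendsto_one_div_add_atTop_nhds_zero_nat (𝕜 := ℝ)
  have hcauchy : CauchySeq m := by
    refine cauchySeq_of_le_tendsto_0 (fun k : ℕ => 1 / ((k : ℝ) + 1)) (fun i j N hi hj => ?_) hlim
    have hi' : 1 / ((i : ℝ) + 1) ≤ 1 / ((N : ℝ) + 1) := Nat.one_div_le_one_div hi
    have hj' : 1 / ((j : ℝ) + 1) ≤ 1 / ((N : ℝ) + 1) := Nat.one_div_le_one_div hj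
    have h := dist_midpoint_le hfour (hmx j) (hmy j)
      ((dist_comm _ _).trans_le (hum i _ (hx j))) ((dist_comm _ _).trans_le (hum i _ (hy j)))
    linarith [hxy j]
  obtain ⟨c, hc⟩ := cauchySeq_tendsto_of_complete hcauchy
  refine ⟨c, fun u hu => Metric.mem_closedBall.mpr ?_⟩
  have hle : dist u c ≤ D / 2 + 0 / 2 :=
    le_of_tendsto_of_tendsto' (tendsto_const_nhds.dist hc)
      (tendsto_const_nhds.add (hlim.div_const 2)) fun k => hum k u hu
  linarith

/-- In a complete metric tree (complete geodesic metric space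
satisfying the four-point inequality), for every `A ⊆ T`, `ε > 0` and `n ∈ ℕ`: `A` can
be covered by `n` subsets of `T` of diameter at most `2ε` if and only if there are `n`
points of `T` whose closed `ε`-balls cover `A`. -/
theorem cover_iff_net {T : Type*} [MetricSpace T] [CompleteSpace T] [Nonempty T]
    (hgeo : ∀ x y : T, ∃ γ : ℝ → T, γ 0 = x ∧ γ (dist x y) = y ∧
      ∀ s ∈ Set.Icc (0 : ℝ) (dist x y), ∀ t ∈ Set.Icc (0 : ℝ) (dist x y),
        dist (γ s) (γ t) = |s - t|)
    (hfour : ∀ x₁ x₂ x₃ x₄ : T, dist x₁ x₂ + dist x₃ x₄ ≤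
      max (dist x₁ x₃ + dist x₂ x₄) (dist x₁ x₄ + dist x₂ x₃))
    (A : Set T) (ε : ℝ) (hε : 0 < ε) (n : ℕ) :
    (∃ U : Fin n → Set T, (∀ i, ∀ x ∈ U i, ∀ y ∈ U i, dist x y ≤ 2 * ε) ∧
        A ⊆ ⋃ i, U i) ↔
      (∃ t : Fin n → T, A ⊆ ⋃ i, Metric.closedBall (t i) ε) := by
  constructor
  · rintro ⟨U, hU, hA⟩
    have hball : ∀ i, ∃ c : T, U i ⊆ Metric.closedBall c ε := by
      intro i
      rcases (U i).eq_empty_or_nonempty with h | h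
      · exact ⟨Classical.arbitrary T, by simp [h]⟩
      · exact exists_center hgeo hfour h (hU i)
    choose t ht using hball
    exact ⟨t, hA.trans (Set.iUnion_mono ht)⟩
  · rintro ⟨t, ht⟩
    refine ⟨fun i => Metric.closedBall (t i) ε, fun i x hx y hy => ?_, ht⟩
    have h := dist_triangle_right x y (t i)
    rw [Metric.mem_closedBall] at hx hy
    linarith
end

section
/- Let X be a real normed space and A ⊆ X a nonempty bounded subset. Then the sequence of Kolmogorov diameters δ_n(A,X) converges, as n → ∞, to the ball measure of non-compactness β(A,X), and likewise the sequence of affine Kolmogorov diameters δ_n^{(a)}(A,X) converges to β(A,X). -/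
/-!
The chain `β(A) ≤ δ_n^{(a)}(A) ≤ δ_n(A)` holds for every `n`, and `δ_n(A) ≤ b` eventually for
every `b > 0` such that `A` has a finite cover by closed balls of radius `b`; squeezing gives both
limits.

* `ballMeasureNoncompact_le_iSup`: if every point of `A` is within `r` of a finite-dimensional
  affine subspace `M`, then, `A` being bounded, the approximating points lie in a compact piece of
  `M`. A finite `ε`-net of that piece is a finite `(r + ε)`-net of `A`.
* `kolmogorovDiam_le_of_cover`: the centers of a finite cover span a subspace of dimension at most
  their number, and every point of `A` is within `b` of it.
-/

open Filter

/-- The `n`-th Kolmogorov diameter of `A ⊆ X`: the infimum over linear subspaces `M`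
of dimension at most `n` of `sup_{a ∈ A} dist(a, M)`. -/
noncomputable def kolmogorovDiam {X : Type*} [NormedAddCommGroup X] [NormedSpace ℝ X]
    (A : Set X) (n : ℕ) : ℝ :=
  sInf {r : ℝ | ∃ M : Submodule ℝ X, Module.rank ℝ M ≤ n ∧
    r = ⨆ a : A, Metric.infDist (a : X) (M : Set X)}

/-- The `n`-th affine Kolmogorov diameter of `A ⊆ X`: the infimum over nonempty affine
subspaces `M` of dimension at most `n` of `sup_{a ∈ A} dist(a, M)`. -/
noncomputable def affineKolmogorovDiam {X : Type*} [NormedAddCommGroup X]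
    [NormedSpace ℝ X] (A : Set X) (n : ℕ) : ℝ :=
  sInf {r : ℝ | ∃ M : AffineSubspace ℝ X, (M : Set X).Nonempty ∧
    Module.rank ℝ M.direction ≤ n ∧
    r = ⨆ a : A, Metric.infDist (a : X) (M : Set X)}

/-- The ball (Hausdorff) measure of non-compactness of `A ⊆ X`: the infimum of the
`b > 0` such that `A` is covered by finitely many closed balls of radius `b` with
centers in `X`. -/
noncomputable def ballMeasureNoncompact {X : Type*} [NormedAddCommGroup X]
    (A : Set X) : ℝ :=
  sInf {b : ℝ | 0 < b ∧ ∃ s : Finset X, A ⊆ ⋃ c ∈ s, Metric.closedBall c b}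

section KolmogorovAux

variable {X : Type*} [NormedAddCommGroup X]

lemma ballMeasureNoncompact_le {A : Set X} {b : ℝ} (hb : 0 < b) (s : Finset X)
    (hs : A ⊆ ⋃ c ∈ s, Metric.closedBall c b) : ballMeasureNoncompact A ≤ b :=
  csInf_le ⟨0, fun _ h => h.1.le⟩ ⟨hb, s, hs⟩

lemma bddAbove_infDist {A : Set X} (hAb : Bornology.IsBounded A) {M : Set X} (hM : M.Nonempty) :
    BddAbove (Set.range fun a : A => Metric.infDist (a : X) M) := by
  obtain ⟨p, hp⟩ := hM
  obtain ⟨R, hR⟩ := hAb.subset_closedBall p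
  refine ⟨R, ?_⟩
  rintro _ ⟨a, rfl⟩
  exact (Metric.infDist_le_dist_of_mem hp).trans (hR a.2)

variable [NormedSpace ℝ X]

/-- The ball measure of non-compactness is at most the deviation of `A` from any
finite-dimensional affine subspace. -/
lemma ballMeasureNoncompact_le_iSup {A : Set X} (hAb : Bornology.IsBounded A)
    (M : AffineSubspace ℝ X) (hM : (M : Set X).Nonempty) {n : ℕ}
    (hn : Module.rank ℝ M.direction ≤ n) :
    ballMeasureNoncompact A ≤ ⨆ a : A, Metric.infDist (a : X) (M : Set X) := by
  set d := ⨆ a : A, Metric.infDist (a : X) (M : Set X) with hd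
  have hd0 : 0 ≤ d := Real.iSup_nonneg fun _ => Metric.infDist_nonneg
  have hfin : FiniteDimensional ℝ M.direction :=
    Module.rank_lt_aleph0_iff.1 (hn.trans_lt (Cardinal.natCast_lt_aleph0))
  have hprop : ProperSpace M.direction := FiniteDimensional.proper ℝ M.direction
  have hbdd := bddAbove_infDist hAb hM
  refine le_of_forall_pos_le_add fun ε hε => ?_
  obtain ⟨p, hp⟩ := hM
  obtain ⟨R, hR⟩ := hAb.subset_closedBall p
  -- Points of `M` within `d + ε / 2` of `A` lie within `R + (d + ε / 2)` of `p`.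
  have hK : IsCompact ((fun v : M.direction => (v : X) + p) ''
      Metric.closedBall 0 (R + (d + ε / 2))) :=
    (isCompact_closedBall _ _).image (by fun_prop)
  obtain ⟨t, ht, hcov⟩ := Metric.totallyBounded_iff.1 hK.totallyBounded (ε / 2) (by positivity)
  refine ballMeasureNoncompact_le (by positivity) ht.toFinset fun a ha => ?_
  have h1 : Metric.infDist a (M : Set X) < d + ε / 2 :=
    (le_ciSup hbdd ⟨a, ha⟩).trans_lt (by linarith)
  obtain ⟨m, hm, ham⟩ := (Metric.infDist_lt_iff ⟨p, hp⟩).1 h1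
  have hmK : m ∈ (fun v : M.direction => (v : X) + p) ''
      Metric.closedBall 0 (R + (d + ε / 2)) := by
    refine ⟨⟨m - p, M.vsub_mem_direction hm hp⟩, ?_, by simp⟩
    have h2 : dist a p ≤ R := hR ha
    have h3 := dist_triangle_left m p a
    rw [mem_closedBall_zero_iff, Submodule.coe_norm, ← dist_eq_norm]
    linarith
  obtain ⟨c, hc, hmc⟩ := Set.mem_iUnion₂.1 (hcov hmK)
  refine Set.mem_iUnion₂.2 ⟨c, ht.mem_toFinset.2 hc, ?_⟩
  rw [Metric.mem_ball] at hmc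
  rw [Metric.mem_closedBall]
  linarith [dist_triangle a m c]

lemma ballMeasureNoncompact_le_affineKolmogorovDiam {A : Set X} (hAb : Bornology.IsBounded A)
    (n : ℕ) : ballMeasureNoncompact A ≤ affineKolmogorovDiam A n := by
  refine le_csInf ⟨_, (⊥ : Submodule ℝ X).toAffineSubspace,
    ⟨0, (⊥ : Submodule ℝ X).zero_mem⟩,
    by rw [Submodule.toAffineSubspace_direction, rank_bot]; exact zero_le, rfl⟩ ?_
  rintro _ ⟨M, hM, hn, rfl⟩
  exact ballMeasureNoncompact_le_iSup hAb M hM hn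

lemma affineKolmogorovDiam_le_kolmogorovDiam (A : Set X) (n : ℕ) :
    affineKolmogorovDiam A n ≤ kolmogorovDiam A n := by
  refine csInf_le_csInf ⟨0, ?_⟩ ⟨_, ⊥, by simp, rfl⟩ ?_
  · rintro _ ⟨M, -, -, rfl⟩
    exact Real.iSup_nonneg fun _ => Metric.infDist_nonneg
  · rintro _ ⟨M, hn, rfl⟩
    exact ⟨M.toAffineSubspace, ⟨0, M.zero_mem⟩,
      by rwa [Submodule.toAffineSubspace_direction], rfl⟩

lemma kolmogorovDiam_le_of_cover {A : Set X} {b : ℝ} (hb : 0 < b) (s : Finset X)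
    (hs : A ⊆ ⋃ c ∈ s, Metric.closedBall c b) {n : ℕ} (hn : s.card ≤ n) :
    kolmogorovDiam A n ≤ b := by
  have hmem : (⨆ a : A, Metric.infDist (a : X) (Submodule.span ℝ (s : Set X) : Set X)) ≤ b := by
    refine Real.iSup_le (fun a => ?_) hb.le
    obtain ⟨c, hc, hac⟩ := Set.mem_iUnion₂.1 (hs a.2)
    exact (Metric.infDist_le_dist_of_mem (Submodule.subset_span hc)).trans hac
  refine le_trans ?_ hmem
  refine csInf_le ⟨0, ?_⟩ ⟨Submodule.span ℝ (s : Set X), ?_, rfl⟩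
  · rintro _ ⟨M, -, rfl⟩
    exact Real.iSup_nonneg fun _ => Metric.infDist_nonneg
  · exact (rank_span_finset_le s).trans (by exact_mod_cast hn)

end KolmogorovAux

/-- For a nonempty bounded subset `A` of a real normed space `X`, the
Kolmogorov diameters `δ_n(A,X)` converge to the ball measure of non-compactness
`β(A,X)` as `n → ∞`, and likewise for the affine Kolmogorov diameters. -/
theorem kolmogorov_diam_tendsto_ballMeasure {X : Type*} [NormedAddCommGroup X]
    [NormedSpace ℝ X] (A : Set X) (hA : A.Nonempty) (hAb : Bornology.IsBounded A) :
    Tendsto (fun n => kolmogorovDiam A n) atTop (nhds (ballMeasureNoncompact A)) ∧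
    Tendsto (fun n => affineKolmogorovDiam A n) atTop (nhds (ballMeasureNoncompact A)) := by
  have h1 := ballMeasureNoncompact_le_affineKolmogorovDiam hAb
  have h2 := affineKolmogorovDiam_le_kolmogorovDiam A
  have hlim : Tendsto (fun n => kolmogorovDiam A n) atTop (nhds (ballMeasureNoncompact A)) := by
    refine tendsto_order.2 ⟨fun x hx => .of_forall fun n => hx.trans_le ((h1 n).trans (h2 n)),
      fun x hx => ?_⟩
    -- The infimum defining `β(A)` is over a nonempty set, since one large ball covers `A`.
    have hne : {b : ℝ | 0 < b ∧ ∃ s : Finset X, A ⊆ ⋃ c ∈ s, Metric.closedBall c b}.Nonempty := by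
      obtain ⟨R, hR0, hR⟩ := hAb.subset_closedBall_lt 0 (0 : X)
      exact ⟨R, hR0, {0}, by simpa using hR⟩
    obtain ⟨b, ⟨hb, s, hs⟩, hbx⟩ := exists_lt_of_csInf_lt hne hx
    filter_upwards [eventually_ge_atTop s.card] with n hn
    exact (kolmogorovDiam_le_of_cover hb s hs hn).trans_lt hbx
  exact ⟨hlim, tendsto_of_tendsto_of_tendsto_of_le_of_le tendsto_const_nhds hlim h1 h2⟩
end

section
/- Let X be a real normed space, A ⊆ X a nonempty bounded subset, and n ∈ ℕ. Then δ_n(A,X) ≥ δ_n^{(a)}(A,X) ≥ δ_{n+1}(conv(A ∪ (−A)), X), where conv(A ∪ (−A)) is the convex hull of A ∪ {−a : a ∈ A}. -/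
theorem infDist_le_iff_mem_cthickening {X : Type*} [PseudoMetricSpace X] {S : Set X}
    (hS : S.Nonempty) {r : ℝ} (hr : 0 ≤ r) (x : X) :
    Metric.infDist x S ≤ r ↔ x ∈ Metric.cthickening r S := by
  rw [Metric.mem_cthickening_iff, Metric.infDist,
    ENNReal.le_ofReal_iff_toReal_le (Metric.infEDist_ne_top hS) hr]

/-- A bound on the distance to a linear subspace passes from `A` to its absolutely convex hull. -/
theorem infDist_le_of_mem_convexHull_union_neg {X : Type*} [NormedAddCommGroup X]
    [NormedSpace ℝ X] {A : Set X} {N : Submodule ℝ X} {r : ℝ} (hr : 0 ≤ r)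
    (h : ∀ a ∈ A, Metric.infDist a (N : Set X) ≤ r) {x : X}
    (hx : x ∈ convexHull ℝ (A ∪ -A)) : Metric.infDist x (N : Set X) ≤ r := by
  have hN : (N : Set X).Nonempty := ⟨0, N.zero_mem⟩
  rw [infDist_le_iff_mem_cthickening hN hr]
  refine convexHull_min ?_ (N.convex.cthickening r) hx
  rintro y (hy | hy)
  · exact (infDist_le_iff_mem_cthickening hN hr y).1 (h y hy)
  · rw [← infDist_le_iff_mem_cthickening hN hr]
    have key := Metric.infDist_image (isometry_neg (G := X)) (x := y) (t := (N : Set X))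
    have himage : (fun z : X => -z) '' (N : Set X) = N := by
      ext z
      simp
    rw [← key]
    simpa [himage] using h (-y) hy

/-- Boundedness of `A` makes `⨆ a : A, dist(a, S)` a genuine supremum. -/
theorem bddAbove_range_infDist {X : Type*} [PseudoMetricSpace X] {A S : Set X}
    (hA : Bornology.IsBounded A) (hS : S.Nonempty) :
    BddAbove (Set.range fun a : A => Metric.infDist (a : X) S) := by
  obtain ⟨p, hp⟩ := hS
  obtain ⟨R, hR⟩ := hA.subset_closedBall p
  refine ⟨R, ?_⟩
  rintro _ ⟨a, rfl⟩
  exact (Metric.infDist_le_dist_of_mem hp).trans (hR a.2)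

/-- Suprema of distances are nonnegative, so the infima defining the diameters are genuine. -/
theorem iSup_infDist_nonneg {X : Type*} [PseudoMetricSpace X] (A S : Set X) :
    0 ≤ ⨆ a : A, Metric.infDist (a : X) S :=
  Real.iSup_nonneg fun _ => Metric.infDist_nonneg

/-- For a nonempty bounded `A ⊆ X` and `n ∈ ℕ`:
`δ_n(A,X) ≥ δ_n^{(a)}(A,X) ≥ δ_{n+1}(conv(A ∪ (−A)), X)`. -/
theorem kolmogorov_diam_affine_chain {X : Type*} [NormedAddCommGroup X]
    [NormedSpace ℝ X] (A : Set X) (hA : A.Nonempty) (hAb : Bornology.IsBounded A)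
    (n : ℕ) :
    affineKolmogorovDiam A n ≤ kolmogorovDiam A n ∧
    kolmogorovDiam (convexHull ℝ (A ∪ -A)) (n + 1) ≤ affineKolmogorovDiam A n := by
  constructor
  · refine le_csInf ⟨_, ⊥, by simp, rfl⟩ ?_
    rintro r ⟨M, hM, rfl⟩
    refine csInf_le ⟨0, ?_⟩ ⟨M.toAffineSubspace, ⟨0, M.zero_mem⟩, ?_, rfl⟩
    · rintro _ ⟨L, -, -, rfl⟩
      exact iSup_infDist_nonneg _ _
    · rwa [Submodule.toAffineSubspace_direction]
  · refine le_csInf ⟨_, AffineSubspace.mk' 0 ⊥, AffineSubspace.mk'_nonempty _ _,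
      by rw [AffineSubspace.direction_mk']; simp, rfl⟩ ?_
    rintro r ⟨M, ⟨p, hp⟩, hM, rfl⟩
    have hsub : (M : Set X) ⊆ (M.direction ⊔ Submodule.span ℝ {p} : Submodule ℝ X) := by
      intro x hx
      rw [SetLike.mem_coe, Submodule.mem_sup]
      exact ⟨x - p, AffineSubspace.vsub_mem_direction hx hp, p,
        Submodule.mem_span_singleton_self p, sub_add_cancel x p⟩
    have hrank : Module.rank ℝ (M.direction ⊔ Submodule.span ℝ {p} : Submodule ℝ X)
        ≤ ((n + 1 : ℕ) : Cardinal) := by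
      refine (Submodule.rank_add_le_rank_add_rank _ _).trans ?_
      push_cast
      refine add_le_add hM ((rank_span_le _).trans ?_)
      simp
    have hle : (⨆ x : convexHull ℝ (A ∪ -A), Metric.infDist (x : X)
        ((M.direction ⊔ Submodule.span ℝ {p} : Submodule ℝ X) : Set X)) ≤
        ⨆ a : A, Metric.infDist (a : X) (M : Set X) := by
      refine Real.iSup_le (fun x => ?_) (iSup_infDist_nonneg _ _)
      refine infDist_le_of_mem_convexHull_union_neg (iSup_infDist_nonneg _ _) (fun a ha => ?_) x.2
      exact (Metric.infDist_le_infDist_of_subset hsub ⟨p, hp⟩).trans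
        (le_ciSup (bddAbove_range_infDist hAb ⟨p, hp⟩) (⟨a, ha⟩ : A))
    refine le_trans ?_ hle
    refine csInf_le ⟨0, ?_⟩ ⟨_, hrank, rfl⟩
    rintro _ ⟨L, -, rfl⟩
    exact iSup_infDist_nonneg _ _
end
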